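/- Let X, Y, Z, W, V be types, g : X → Z, h : Y → W, and f : Z × W → V. Then the Zadeh extension of the composite function (x, y) ↦ f(g(x), h(y)) applied to fuzzy elements 𝗑 ∈ F(X), 𝗒 ∈ F(Y) equals the composite of the Zadeh extensions: for every v ∈ V, (f ∘ (g × h))~(𝗑, 𝗒)[v] = f̃( g̃(𝗑), h̃(𝗒) )[v]. That is, Zadeh extension is compositional when the arguments of the inner functions are disjoint variables. -/

import Mathlib

open Set

/-- Zadeh extension of a one-argument function applied to a fuzzy element. -/
noncomputable def zadeh1 {X Z : Type*} (g : X → Z) (x : X → ℝ) : Z → ℝ :=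
  fun z => sSup {m : ℝ | ∃ a : X, g a = z ∧ m = x a}

/-- Zadeh extension of a two-argument function applied to fuzzy elements. -/
noncomputable def zadeh2 {Z W V : Type*} (f : Z → W → V) (x : Z → ℝ) (y : W → ℝ) : V → ℝ :=
  fun v => sSup {m : ℝ | ∃ a b, f a b = v ∧ m = min (x a) (y b)}

theorem zadeh1_le_one {X Z : Type*} (g : X → Z) (x : X → ℝ)
    (hx : ∀ t, x t ∈ Icc (0:ℝ) 1) (z : Z) : zadeh1 g x z ≤ 1 := by
  apply Real.sSup_le _ zero_le_one
  rintro m ⟨a, _, rfl⟩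
  exact (hx a).2

theorem zadeh1_nonneg {X Z : Type*} (g : X → Z) (x : X → ℝ)
    (hx : ∀ t, x t ∈ Icc (0:ℝ) 1) (z : Z) : 0 ≤ zadeh1 g x z := by
  apply Real.sSup_nonneg
  rintro m ⟨a, _, rfl⟩
  exact (hx a).1

theorem le_zadeh1 {X Z : Type*} (g : X → Z) (x : X → ℝ)
    (hx : ∀ t, x t ∈ Icc (0:ℝ) 1) (a : X) : x a ≤ zadeh1 g x (g a) := by
  apply le_csSup
  · refine ⟨1, ?_⟩
    rintro m ⟨a, _, rfl⟩
    exact (hx a).2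
  · exact ⟨a, rfl, rfl⟩

theorem exists_of_lt_zadeh1 {X Z : Type*} (g : X → Z) (x : X → ℝ) (z : Z) (s : ℝ)
    (hs : 0 ≤ s) (h : s < zadeh1 g x z) : ∃ a, g a = z ∧ s < x a := by
  by_contra! hc
  refine absurd h (not_lt.mpr (Real.sSup_le ?_ hs))
  rintro m ⟨a, ha, rfl⟩
  exact hc a ha

theorem zadeh2_nonneg {Z W V : Type*} (f : Z → W → V) (x : Z → ℝ) (y : W → ℝ)
    (hx : ∀ t, x t ∈ Icc (0:ℝ) 1) (hy : ∀ t, y t ∈ Icc (0:ℝ) 1) (v : V) :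
    0 ≤ zadeh2 f x y v := by
  apply Real.sSup_nonneg
  rintro m ⟨a, b, _, rfl⟩
  exact le_min (hx a).1 (hy b).1

theorem le_zadeh2 {Z W V : Type*} (f : Z → W → V) (x : Z → ℝ) (y : W → ℝ)
    (hx : ∀ t, x t ∈ Icc (0:ℝ) 1) (a : Z) (b : W) :
    min (x a) (y b) ≤ zadeh2 f x y (f a b) := by
  apply le_csSup
  · refine ⟨1, ?_⟩
    rintro m ⟨a, b, _, rfl⟩
    exact (min_le_left _ _).trans (hx a).2
  · exact ⟨a, b, rfl, rfl⟩

theorem zadeh_compositional {X Y Z W V : Type*}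
    (g : X → Z) (h : Y → W) (f : Z → W → V)
    (x : X → ℝ) (y : Y → ℝ)
    (hx : ∀ t, x t ∈ Icc (0:ℝ) 1) (hy : ∀ t, y t ∈ Icc (0:ℝ) 1) :
    ∀ v : V,
      zadeh2 (fun a b => f (g a) (h b)) x y v =
        zadeh2 f (zadeh1 g x) (zadeh1 h y) v := by
  intro v
  have hgx : ∀ t, zadeh1 g x t ∈ Icc (0:ℝ) 1 :=
    fun t => ⟨zadeh1_nonneg g x hx t, zadeh1_le_one g x hx t⟩
  have hhy : ∀ t, zadeh1 h y t ∈ Icc (0:ℝ) 1 :=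
    fun t => ⟨zadeh1_nonneg h y hy t, zadeh1_le_one h y hy t⟩
  have hS := zadeh2_nonneg (fun a b => f (g a) (h b)) x y hx hy v
  apply le_antisymm
  · apply Real.sSup_le _ (zadeh2_nonneg f _ _ hgx hhy v)
    rintro m ⟨a, b, rfl, rfl⟩
    exact (min_le_min (le_zadeh1 g x hx a) (le_zadeh1 h y hy b)).trans
      (le_zadeh2 f _ _ hgx (g a) (h b))
  · apply Real.sSup_le _ hS
    rintro m ⟨c, d, hv, rfl⟩
    by_contra! hc
    obtain ⟨h1, h2⟩ := lt_min_iff.mp hc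
    obtain ⟨a, rfl, ha⟩ := exists_of_lt_zadeh1 g x c _ hS h1
    obtain ⟨b, rfl, hb⟩ := exists_of_lt_zadeh1 h y d _ hS h2
    have := le_zadeh2 (fun a b => f (g a) (h b)) x y hx a b
    simp only [hv] at this
    exact absurd (lt_min ha hb) (not_lt.mpr this)
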